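/- Let l ≥ 1 and let 𝒟 ≤ 1 be any upper bound for the largest eigenvalue λ_{N−1}[l] of the normalized Laplacian Δ[l] of the neighborhood graph Γ[l], i.e. λ_{N−1}[l] ≤ 𝒟. If l is even, then every eigenvalue λ_k of Δ lies in the union of intervals [0, 1 − (1 − 𝒟)^{1/l}] ∪ [1 + (1 − 𝒟)^{1/l}, 2]; in particular no eigenvalue of Δ lies in the open interval (1 − (1 − 𝒟)^{1/l}, 1 + (1 − 𝒟)^{1/l}). If l is odd, then λ_{N−1} ≤ 1 − (1 − 𝒟)^{1/l}. -/

import Mathlib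

open Finset

noncomputable section

namespace BJ

variable {V : Type*} [Fintype V] [DecidableEq V]

/-- The degree `d_i = ∑_j w_ij` of a vertex. -/
def deg (w : V → V → ℝ) (i : V) : ℝ := ∑ j, w i j

/-- The volume `vol(A) = ∑_{i ∈ A} d_i` of a vertex subset. -/
def vol (w : V → V → ℝ) (A : Finset V) : ℝ := ∑ i ∈ A, deg w i

/-- The total edge weight `|E(A,B)| = ∑_{i ∈ A, j ∈ B} w_ij` between two vertex subsets. -/
def eW (w : V → V → ℝ) (A B : Finset V) : ℝ := ∑ i ∈ A, ∑ j ∈ B, w i j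

/-- The normalized graph Laplacian `(Δu)(i) = u(i) - (1/d_i) ∑_j w_ij u(j)`. -/
def lap (w : V → V → ℝ) (u : V → ℝ) (i : V) : ℝ :=
  u i - (1 / deg w i) * ∑ j, w i j * u j

/-- `lam` is an eigenvalue of the normalized graph Laplacian. -/
def IsEigen (w : V → V → ℝ) (lam : ℝ) : Prop :=
  ∃ u : V → ℝ, u ≠ 0 ∧ ∀ i, lap w u i = lam * u i

/-- The weighted graph is connected: any two vertices are joined by a chain of
positive-weight edges. -/
def Conn (w : V → V → ℝ) : Prop :=
  ∀ i j : V, Relation.ReflTransGen (fun a b => 0 < w a b) i j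

/-- The weighted graph is bipartite: the vertex set splits into two nonempty classes with
no edges inside a class. -/
def Bipartite (w : V → V → ℝ) : Prop :=
  ∃ A : Finset V, A.Nonempty ∧ Aᶜ.Nonempty ∧
    (∀ i ∈ A, ∀ j ∈ A, w i j = 0) ∧ (∀ i ∈ Aᶜ, ∀ j ∈ Aᶜ, w i j = 0)

/-- The Cheeger constant
`h = min { |E(U,Uᶜ)| / vol(U) : ∅ ≠ U ⊊ V, vol(U) ≤ vol(V)/2 }`. -/
def cheeger (w : V → V → ℝ) : ℝ :=
  sInf { r : ℝ | ∃ U : Finset V, U.Nonempty ∧ U ≠ Finset.univ ∧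
    vol w U ≤ vol w Finset.univ / 2 ∧ r = eW w U Uᶜ / vol w U }

/-- The dual Cheeger constant
`h̄ = max { 2|E(V₁,V₂)| / (vol(V₁)+vol(V₂)) }` over pairs of disjoint nonempty vertex sets
`V₁, V₂` (the third class `V₃` of the partition being the complement of `V₁ ∪ V₂`). -/
def dualCheeger (w : V → V → ℝ) : ℝ :=
  sSup { r : ℝ | ∃ V1 V2 : Finset V, V1.Nonempty ∧ V2.Nonempty ∧ Disjoint V1 V2 ∧
    r = 2 * eW w V1 V2 / (vol w V1 + vol w V2) }

/-- The weights of the neighborhood graph `Γ[l]`: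
`w_ij[l] = ∑_{k₁,…,k_{l-1}} w_{i k₁} w_{k₁ k₂} ⋯ w_{k_{l-1} j} / (d_{k₁} ⋯ d_{k_{l-1}})`,
defined recursively (as a matrix, `wl w l = D ⬝ P^l`; in particular `wl w 1 = w`). -/
def wl (w : V → V → ℝ) : ℕ → V → V → ℝ
  | 0 => fun i j => if i = j then deg w i else 0
  | n + 1 => fun i j => ∑ k, wl w n i k * w k j / deg w k

lemma eigen_bound (w : V → V → ℝ) (hnn : ∀ i j, 0 ≤ w i j) (hdeg : ∀ i, 0 < deg w i)
    (μ : ℝ) (h : IsEigen w μ) : |1 - μ| ≤ 1 := by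
  obtain ⟨u, hu, he⟩ := h
  obtain ⟨a, ha⟩ := Function.ne_iff.mp hu
  obtain ⟨i, -, hi⟩ := Finset.exists_max_image univ (fun i => |u i|) ⟨a, mem_univ a⟩
  have hpos : 0 < |u i| := lt_of_lt_of_le (abs_pos.mpr ha) (hi a (mem_univ a))
  have h1 : ∑ j, w i j * u j = deg w i * ((1 - μ) * u i) := by
    have := he i
    have hd := (hdeg i).ne'
    unfold lap at this
    have h2 : (1 / deg w i) * ∑ j, w i j * u j = (1 - μ) * u i := by linarith
    rw [← h2]
    field_simp
  have h3 : |∑ j, w i j * u j| ≤ deg w i * |u i| := by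
    refine (Finset.abs_sum_le_sum_abs _ _).trans ?_
    unfold deg
    rw [Finset.sum_mul]
    refine Finset.sum_le_sum fun j _ => ?_
    rw [abs_mul, abs_of_nonneg (hnn i j)]
    exact mul_le_mul_of_nonneg_left (hi j (mem_univ j)) (hnn i j)
  rw [h1, abs_mul, abs_mul, abs_of_pos (hdeg i)] at h3
  have h4 := le_of_mul_le_mul_left h3 (hdeg i)
  nlinarith

lemma wl_nonneg (w : V → V → ℝ) (hnn : ∀ i j, 0 ≤ w i j) (hdeg : ∀ i, 0 < deg w i)
    (l : ℕ) : ∀ i j, 0 ≤ wl w l i j := by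
  induction l with
  | zero =>
    intro i j
    simp only [wl]
    split_ifs
    · exact (hdeg i).le
    · exact le_rfl
  | succ n ih =>
    intro i j
    simp only [wl]
    exact Finset.sum_nonneg fun k _ => div_nonneg (mul_nonneg (ih i k) (hnn k j)) (hdeg k).le

lemma wl_apply (w : V → V → ℝ) (hdeg : ∀ i, 0 < deg w i) (u : V → ℝ) (c : ℝ)
    (hu : ∀ i, ∑ j, w i j * u j = deg w i * (c * u i)) (l : ℕ) :
    ∀ i, ∑ j, wl w l i j * u j = deg w i * (c ^ l * u i) := by
  induction l with
  | zero => intro i; simp [wl]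
  | succ n ih =>
    intro i
    simp only [wl, Finset.sum_mul]
    rw [Finset.sum_comm]
    have : ∀ k, ∑ j, wl w n i k * w k j / deg w k * u j = c * (wl w n i k * u k) := by
      intro k
      have hd := (hdeg k).ne'
      have : ∀ j, wl w n i k * w k j / deg w k * u j
          = wl w n i k / deg w k * (w k j * u j) := by intro j; ring
      simp only [this]
      rw [← Finset.mul_sum, hu]
      field_simp
    simp only [this]
    rw [← Finset.mul_sum, ih]
    ring

lemma wl_deg (w : V → V → ℝ) (hdeg : ∀ i, 0 < deg w i) (l : ℕ) (i : V) :
    deg (wl w l) i = deg w i := by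
  have := wl_apply w hdeg (fun _ => 1) 1 (by intro i; simp [deg]) l i
  simpa [deg] using this

lemma wl_eigen (w : V → V → ℝ) (hdeg : ∀ i, 0 < deg w i) (μ : ℝ) (h : IsEigen w μ) (l : ℕ) :
    IsEigen (wl w l) (1 - (1 - μ) ^ l) := by
  obtain ⟨u, hu, he⟩ := h
  refine ⟨u, hu, fun i => ?_⟩
  have h1 : ∀ i, ∑ j, w i j * u j = deg w i * ((1 - μ) * u i) := by
    intro i
    have := he i
    have hd := (hdeg i).ne'
    unfold lap at this
    have h2 : (1 / deg w i) * ∑ j, w i j * u j = (1 - μ) * u i := by linarith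
    rw [← h2]
    field_simp
  unfold lap
  rw [wl_deg w hdeg, wl_apply w hdeg u _ h1]
  have hd := (hdeg i).ne'
  field_simp

/-- Theorem: spectral gap around 1 from an upper bound on
`λ_{N-1}[l]`. Let `𝒟 ≤ 1` be an upper bound for the largest eigenvalue of the
normalized Laplacian of the neighborhood graph `Γ[l]`. If `l` is even, every eigenvalue
of `Δ` lies in `[0, 1 - (1-𝒟)^{1/l}] ∪ [1 + (1-𝒟)^{1/l}, 2]`; if `l` is odd, then
`λ_{N-1} ≤ 1 - (1-𝒟)^{1/l}`. -/
theorem eigenvalue_gap_from_neighborhood_upper_bound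
    (w : V → V → ℝ)
    (hsym : ∀ i j, w i j = w j i) (hnn : ∀ i j, 0 ≤ w i j)
    (hdeg : ∀ i, 0 < deg w i) (hconn : Conn w) (hN : 2 ≤ Fintype.card V)
    (lamN : ℝ) (hlamN : IsEigen w lamN) (hlamNmax : ∀ μ, IsEigen w μ → μ ≤ lamN)
    (l : ℕ) (hl : 1 ≤ l)
    (lamNl : ℝ) (hlamNl : lamNl = sSup { μ : ℝ | IsEigen (wl w l) μ })
    (D : ℝ) (hD1 : D ≤ 1) (hDle : lamNl ≤ D) :
    (Even l → ∀ μ, IsEigen w μ →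
        (0 ≤ μ ∧ μ ≤ 1 - (1 - D) ^ ((1 : ℝ) / l)) ∨
          (1 + (1 - D) ^ ((1 : ℝ) / l) ≤ μ ∧ μ ≤ 2)) ∧
      (Odd l → lamN ≤ 1 - (1 - D) ^ ((1 : ℝ) / l)) := by
  have key : ∀ μ, IsEigen w μ → 1 - D ≤ (1 - μ) ^ l := by
    intro μ hμ
    have hb : BddAbove { μ : ℝ | IsEigen (wl w l) μ } := by
      refine ⟨2, fun x hx => ?_⟩
      have := eigen_bound (wl w l) (wl_nonneg w hnn hdeg l)
        (fun i => by rw [wl_deg w hdeg]; exact hdeg i) x hx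
      have := abs_le.mp this
      linarith
    have := le_csSup hb (wl_eigen w hdeg μ hμ l)
    linarith
  have hl0 : l ≠ 0 := by omega
  have hr0 : 0 ≤ (1 - D) ^ ((1 : ℝ) / l) := Real.rpow_nonneg (by linarith) _
  have hrl : ((1 - D) ^ ((1 : ℝ) / l)) ^ l = 1 - D := by
    rw [one_div]
    exact Real.rpow_inv_natCast_pow (by linarith) hl0
  generalize (1 - D) ^ ((1 : ℝ) / l) = r at hr0 hrl
  constructor
  · intro he μ hμ
    have hb := abs_le.mp (eigen_bound w hnn hdeg μ hμ)
    have hk := key μ hμ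
    rw [← hrl, ← he.pow_abs (1 - μ)] at hk
    have h := le_of_pow_le_pow_left₀ hl0 (abs_nonneg _) hk
    rcases le_abs.mp h with h | h
    · left; constructor <;> linarith
    · right; constructor <;> linarith
  · intro ho
    have hk := key lamN hlamN
    rw [← hrl] at hk
    have := ho.strictMono_pow.le_iff_le.mp hk
    linarith

end BJ
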